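/- Any collection of pairwise disjoint observable subsets of a separable Banach space is at most countable. -/

import Mathlib

open MeasureTheory

/-- Kato's gap metric between two subspaces: the Hausdorff distance between their
intersections with the unit sphere. -/
noncomputable def gapDist {X : Type*} [NormedAddCommGroup X] [NormedSpace ℝ X]
    (E F : Submodule ℝ X) : ℝ :=
  Metric.hausdorffDist ((E : Set X) ∩ Metric.sphere 0 1) ((F : Set X) ∩ Metric.sphere 0 1)

/-- A Borel set `K` in a Banach space `X` is *observable* if there are a point `x₀`, a
splitting `X = F ⊕ E` with `E` finite dimensional, a nonempty open set `U ⊆ F` and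
`δ > 0` such that for every `x ∈ U` and every finite-dimensional subspace `E'` with
`dim E' = dim E` and `gap(E', E) < δ`, the slice of `K` by the affine subspace
`x₀ + x + E'` has positive measure for every (equivalently, some) translation-invariant
Haar measure on `E'`. -/
def Observable {X : Type*} [NormedAddCommGroup X] [NormedSpace ℝ X]
    [MeasurableSpace X] [BorelSpace X] (K : Set X) : Prop :=
  MeasurableSet K ∧
  ∃ (x₀ : X) (F E : Submodule ℝ X), IsClosed (F : Set X) ∧ FiniteDimensional ℝ E ∧
    IsCompl F E ∧
    ∃ (U : Set F) (δ : ℝ), IsOpen U ∧ U.Nonempty ∧ 0 < δ ∧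
      ∀ x ∈ U, ∀ E' : Submodule ℝ X, FiniteDimensional ℝ E' →
        Module.finrank ℝ E' = Module.finrank ℝ E → gapDist E' E < δ →
        ∀ μ : Measure E', μ.IsAddHaarMeasure →
          0 < μ {v : E' | x₀ + (x : X) + (v : X) ∈ K}

theorem aux_norm_sub_inv_smul {X : Type*} [NormedAddCommGroup X] [NormedSpace ℝ X]
    (v : X) (hv : v ≠ 0) : ‖v - ‖v‖⁻¹ • v‖ = |‖v‖ - 1| := by
  have h0 : ‖v‖ ≠ 0 := norm_ne_zero_iff.mpr hv
  have h : v - ‖v‖⁻¹ • v = (1 - ‖v‖⁻¹) • v := by rw [sub_smul, one_smul]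
  have h2 : |‖v‖ - 1| = |(1 - ‖v‖⁻¹) * ‖v‖| := by
    congr 1
    field_simp
  rw [h, norm_smul, h2, abs_mul, abs_norm, Real.norm_eq_abs]

theorem aux_gap {X : Type*} [NormedAddCommGroup X] [NormedSpace ℝ X]
    (T : X →L[ℝ] X) (E : Submodule ℝ X) (ε : ℝ) (hε : ε ≤ 1 / 2)
    (hT : ‖T - 1‖ ≤ ε) : gapDist (E.map (T : X →ₗ[ℝ] X)) E ≤ 4 * ε := by
  have hε0 : 0 ≤ ε := (norm_nonneg _).trans hT
  have key : ∀ v, ‖T v - v‖ ≤ ε * ‖v‖ := fun v => by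
    have := (T - 1).le_of_opNorm_le hT v
    simpa using this
  have key2 : ∀ v, |‖T v‖ - ‖v‖| ≤ ε * ‖v‖ := fun v =>
    (abs_norm_sub_norm_le _ _).trans (key v)
  refine Metric.hausdorffDist_le_of_mem_dist (by positivity) ?_ ?_
  · rintro w ⟨⟨v, hv, rfl⟩, hw⟩
    have hw1 : ‖T v‖ = 1 := by simpa using hw
    have hv0 : v ≠ 0 := by
      rintro rfl
      simp at hw1
    have k2 := key2 v
    rw [hw1] at k2
    have hv2 : ‖v‖ ≤ 2 := by
      have := (abs_le.mp k2).1
      nlinarith [norm_nonneg v]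
    refine ⟨‖v‖⁻¹ • v, ⟨E.smul_mem _ hv, ?_⟩, ?_⟩
    · simp [norm_smul, hv0]
    · have h1 := aux_norm_sub_inv_smul v hv0
      rw [abs_sub_comm] at h1
      have h2 := norm_sub_le_norm_sub_add_norm_sub (T v) v (‖v‖⁻¹ • v)
      have h3 := key v
      have h4 : ε * ‖v‖ ≤ ε * 2 := by gcongr
      rw [dist_eq_norm]
      change ‖T v - ‖v‖⁻¹ • v‖ ≤ _
      linarith
  · rintro v ⟨hv, hv1⟩
    have hv1 : ‖v‖ = 1 := by simpa using hv1
    have k := key v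
    have k2 := key2 v
    rw [hv1] at k k2
    have hT0 : T v ≠ 0 := by
      intro h
      rw [h] at k2
      norm_num at k2
      linarith
    refine ⟨‖T v‖⁻¹ • T v, ⟨Submodule.smul_mem _ _ ⟨v, hv, rfl⟩, ?_⟩, ?_⟩
    · simp [norm_smul, hT0]
    · have h1 := aux_norm_sub_inv_smul (T v) hT0
      have h2 := norm_sub_le_norm_sub_add_norm_sub v (T v) (‖T v‖⁻¹ • T v)
      rw [norm_sub_rev v (T v)] at h2
      rw [dist_eq_norm]
      linarith

/-- Each observable set is seen with positive measure by one of countably many affine subspaces. -/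
theorem aux_observable {X : Type*} [NormedAddCommGroup X] [NormedSpace ℝ X] [CompleteSpace X]
    [MeasurableSpace X] [BorelSpace X] (D : Set X) (hD : Dense D) (K : Set X)
    (hK : Observable K) :
    ∃ (n : ℕ) (d : Fin n → D) (p : D),
      ∀ μ : Measure (Submodule.span ℝ (Set.range fun i => (d i : X))), μ.IsAddHaarMeasure →
        0 < μ {v | (p : X) + (v : X) ∈ K} := by
  obtain ⟨-, x₀, F, E, hF, hfin, hcompl, U, δ, hU, ⟨u₀, hu₀⟩, hδ, H⟩ := hK
  have hEc : IsClosed (E : Set X) := E.closed_of_finiteDimensional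
  have htc : Submodule.IsTopCompl F E :=
    Submodule.IsCompl.isTopCompl_of_isClosed hcompl hF hEc
  have htc2 : Submodule.IsTopCompl E F :=
    Submodule.IsCompl.isTopCompl_of_isClosed hcompl.symm hEc hF
  let πF := F.projectionOntoL E htc
  let πE := E.projectionOntoL F htc2
  let n := Module.finrank ℝ E
  let b : Module.Basis (Fin n) ℝ E := Module.finBasis ℝ E
  let φ : Fin n → (X →L[ℝ] ℝ) := fun i => (LinearMap.toContinuousLinearMap (b.coord i)).comp πE
  let T : (Fin n → X) → (X →L[ℝ] X) := fun d => 1 + ∑ i, (φ i).smulRight (d i - b i)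
  have hTcont : Continuous T := by
    refine continuous_const.add (continuous_finsetSum _ fun i _ => ?_)
    exact (ContinuousLinearMap.smulRightL ℝ X X (φ i)).continuous.comp
      ((continuous_apply i).sub continuous_const)
  have hTb : T (fun i => b i) = 1 := by simp [T]
  obtain ⟨ε, hε0, hε1, hε2⟩ : ∃ ε : ℝ, 0 < ε ∧ ε ≤ 1 / 2 ∧ 4 * ε < δ := by
    refine ⟨min (1 / 2) (δ / 8), by positivity, min_le_left _ _, ?_⟩
    have := min_le_right (1 / 2) (δ / 8)
    linarith
  have hdense : DenseRange (fun (d : Fin n → D) (i : Fin n) => (d i : X)) :=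
    DenseRange.piMap fun _ => hD.denseRange_val
  obtain ⟨d, hd⟩ := hdense.exists_mem_open
    (s := {d | ‖T d - 1‖ < ε}) (isOpen_lt (by fun_prop) continuous_const)
    ⟨fun i => b i, by simpa [hTb] using hε0⟩
  simp only [Set.mem_ofPred_eq] at hd
  set S : X →L[ℝ] X := T (fun i => (d i : X)) with hS
  have hSF : ∀ f : F, S f = f := fun f => by
    have h0 : πE (f : X) = 0 := by
      simp [πE, Submodule.projectionOntoL_apply_eq_zero_iff]
    simp [S, T, φ, h0]
  have hSE : ∀ e : E, S e = ∑ i, b.repr e i • (d i : X) := fun e => by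
    have h0 : πE (e : X) = e := by simp [πE]
    have h1 : (e : X) = ∑ i, b.repr e i • (b i : X) := by
      have h2 := congrArg E.subtype (b.sum_repr e)
      rw [map_sum] at h2
      exact h2.symm
    simp only [S, T, φ, ContinuousLinearMap.add_apply, ContinuousLinearMap.sum_apply,
      ContinuousLinearMap.smulRight_apply, ContinuousLinearMap.comp_apply, h0,
      LinearMap.coe_toContinuousLinearMap', Module.Basis.coord_apply, smul_sub,
      Finset.sum_sub_distrib, ← h1, ContinuousLinearMap.one_apply]
    abel
  have hunit : IsUnit S := by
    have h1 : ‖1 - S‖ < 1 := by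
      rw [norm_sub_rev]
      linarith
    have := (Units.oneSub (1 - S) h1).isUnit
    simpa using this
  obtain ⟨R, hR⟩ := hunit
  have hRS : ∀ x, (R⁻¹.val : X →L[ℝ] X) (S x) = x := fun x => by
    rw [← hR, ← ContinuousLinearMap.mul_apply, Units.inv_mul, ContinuousLinearMap.one_apply]
  have hSR : ∀ x, S ((R⁻¹.val : X →L[ℝ] X) x) = x := fun x => by
    rw [← hR, ← ContinuousLinearMap.mul_apply, Units.mul_inv, ContinuousLinearMap.one_apply]
  have hinj : Function.Injective S := Function.LeftInverse.injective hRS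
  have hmap : E.map (S : X →ₗ[ℝ] X) = Submodule.span ℝ (Set.range fun i => (d i : X)) := by
    apply le_antisymm
    · rintro _ ⟨e, he, rfl⟩
      have := hSE ⟨e, he⟩
      simp only at this
      change S e ∈ _
      rw [this]
      exact Submodule.sum_mem _ fun i _ =>
        Submodule.smul_mem _ _ (Submodule.subset_span ⟨i, rfl⟩)
    · rw [Submodule.span_le]
      rintro _ ⟨i, rfl⟩
      refine ⟨b i, (b i).2, ?_⟩
      change S (b i) = _
      rw [hSE]
      simp [Finsupp.single_apply]
  obtain ⟨p, hp, hpD⟩ := hD.inter_open_nonempty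
    {p | πF ((R⁻¹.val : X →L[ℝ] X) (p - x₀)) ∈ U}
    (hU.preimage (by fun_prop)) ⟨x₀ + u₀, by
      have h1 : (R⁻¹.val : X →L[ℝ] X) (u₀ : X) = u₀ := by
        conv_lhs => rw [← hSF u₀]
        exact hRS _
      simpa [h1, πF] using hu₀⟩
  simp only [Set.mem_ofPred_eq] at hp
  set q := (R⁻¹.val : X →L[ℝ] X) (p - x₀) with hq
  have hqE : q - πF q ∈ E := by
    rw [← Submodule.projectionOntoL_apply_eq_zero_iff htc, map_sub, sub_eq_zero]
    exact (Submodule.projectionOntoL_apply_left htc (πF q)).symm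
  have hpq : p = x₀ + πF q + S (q - πF q) := by
    rw [map_sub, hSF, hq, hSR]
    abel
  refine ⟨n, d, ⟨p, hpD⟩, ?_⟩
  rw [← hmap]
  intro μ hμ
  have hpos := H (πF q) hp (E.map (S : X →ₗ[ℝ] X)) inferInstance
    (LinearEquiv.finrank_eq (Submodule.equivMapOfInjective (S : X →ₗ[ℝ] X) hinj E)).symm ((aux_gap S E ε hε1 hd.le).trans_lt hε2) μ hμ
  let w : E.map (S : X →ₗ[ℝ] X) := ⟨S (q - πF q), ⟨_, hqE, rfl⟩⟩
  rw [← measure_preimage_add μ w] at hpos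
  convert hpos using 2
  ext v
  simp only [Set.mem_ofPred_eq, Set.mem_preimage, Submodule.coe_add, w]
  conv_lhs => rw [hpq]
  rw [add_assoc (x₀ + (πF q : X))]

/-- **Countability of disjoint observable sets** (Lemma 4.22): any collection of
pairwise disjoint observable subsets of a separable Banach space is at most countable. -/
theorem countable_of_pairwise_disjoint_observable
    {X : Type*} [NormedAddCommGroup X] [NormedSpace ℝ X] [CompleteSpace X]
    [TopologicalSpace.SeparableSpace X] [MeasurableSpace X] [BorelSpace X]
    (𝒞 : Set (Set X)) (hobs : ∀ K ∈ 𝒞, Observable K)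
    (hdisj : 𝒞.PairwiseDisjoint id) :
    𝒞.Countable := by
  obtain ⟨D, hDc, hD⟩ := TopologicalSpace.exists_countable_dense X
  have : Countable D := hDc.to_subtype
  have key : ∀ t : (Σ n : ℕ, (Fin n → D)) × D,
      {K : 𝒞 | ∀ μ : Measure (Submodule.span ℝ (Set.range fun i => (t.1.2 i : X))),
        μ.IsAddHaarMeasure → 0 < μ {v | (t.2 : X) + (v : X) ∈ (K : Set X)}}.Countable := by
    rintro ⟨⟨n, d⟩, p⟩
    have : FiniteDimensional ℝ (Submodule.span ℝ (Set.range fun i => (d i : X))) :=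
      FiniteDimensional.span_of_finite ℝ (Set.finite_range _)
    have : ProperSpace (Submodule.span ℝ (Set.range fun i => (d i : X))) :=
      FiniteDimensional.proper ℝ _
    let μ : Measure (Submodule.span ℝ (Set.range fun i => (d i : X))) := Measure.addHaar
    refine (Measure.countable_meas_pos_of_disjoint_iUnion (μ := μ)
      (As := fun K : 𝒞 => {v | (p : X) + (v : X) ∈ (K : Set X)}) ?_ ?_).mono ?_
    · intro K
      exact (continuous_const.add continuous_subtype_val).measurable (hobs K K.2).1
    · intro K L hKL
      have h := hdisj K.2 L.2 (fun h => hKL (Subtype.ext h))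
      exact Disjoint.preimage (fun v : Submodule.span ℝ (Set.range fun i => (d i : X)) =>
        (p : X) + (v : X)) h
    · intro K hK
      exact hK μ inferInstance
  have huniv : (Set.univ : Set 𝒞).Countable := by
    refine (Set.countable_iUnion key).mono fun K _ => ?_
    obtain ⟨n, d, p, H⟩ := aux_observable D hD K (hobs K K.2)
    exact Set.mem_iUnion.mpr ⟨⟨⟨n, d⟩, p⟩, H⟩
  exact Set.countable_coe_iff.mp (Set.countable_univ_iff.mp huniv)
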